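/- Assume in addition that D is invertible and that Δ + b·Q*Q is invertible, where Δ = 𝔔 − 𝔔 Q₋ S Q₋* 𝔔, and set C = (Δ + b·Q*Q)⁻¹. Then C = (b·Q*Q + 𝔔)⁻¹ + (b·Q*Q + 𝔔)⁻¹ 𝔔 Q₋ Š Q₋* 𝔔 (b·Q*Q + 𝔔)⁻¹, where S = (D + Q₋*𝔔Q₋)⁻¹ and Š = (D + Q̌₋*𝔔̌Q̌₋)⁻¹. -/

import Mathlib

open RealInnerProductSpace

theorem aux_unit {V : Type*} [NormedAddCommGroup V] [InnerProductSpace ℝ V]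
    [FiniteDimensional ℝ V] (A : Module.End ℝ V)
    (h : ∀ x : V, x ≠ 0 → 0 < ⟪A x, x⟫) : IsUnit A := by
  rw [LinearMap.isUnit_iff_ker_eq_bot, LinearMap.ker_eq_bot']
  intro m hm
  by_contra hne
  have := h m hne
  rw [hm, inner_zero_left] at this
  exact lt_irrefl _ this

theorem aux_right {V : Type*} [AddCommGroup V] [Module ℝ V] (A : Module.End ℝ V)
    (h : IsUnit A) (x : V) : A (Ring.inverse A x) = x := by
  have := Ring.mul_inverse_cancel A h
  exact LinearMap.congr_fun this x

theorem aux_left {V : Type*} [AddCommGroup V] [Module ℝ V] (A : Module.End ℝ V)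
    (h : IsUnit A) (x : V) : Ring.inverse A (A x) = x := by
  have := Ring.inverse_mul_cancel A h
  exact LinearMap.congr_fun this x

/-- Remark, part (d): `C = (b Q*Q + 𝔔)⁻¹ + (b Q*Q + 𝔔)⁻¹ 𝔔 Q₋ Š Q₋* 𝔔 (b Q*Q + 𝔔)⁻¹`. -/
theorem stmt_16
    {Hm H Hp : Type*}
    [NormedAddCommGroup Hm] [InnerProductSpace ℝ Hm] [FiniteDimensional ℝ Hm]
    [NormedAddCommGroup H] [InnerProductSpace ℝ H] [FiniteDimensional ℝ H]
    [NormedAddCommGroup Hp] [InnerProductSpace ℝ Hp] [FiniteDimensional ℝ Hp]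
    (Qm : Hm →ₗ[ℝ] H) (Q : H →ₗ[ℝ] Hp)
    (b : ℝ) (hb : 0 < b)
    (Qf : Module.End ℝ H) (hQfsym : Qf.IsSymmetric)
    (hQfpos : ∀ x : H, x ≠ 0 → 0 < ⟪Qf x, x⟫)
    (Qfc : Module.End ℝ Hp)
    (hQfc : Qfc = Ring.inverse
      (b⁻¹ • (1 : Module.End ℝ Hp)
        + Q ∘ₗ Ring.inverse Qf ∘ₗ LinearMap.adjoint Q))
    (D : Module.End ℝ Hm)
    (hDQ : IsUnit (D + LinearMap.adjoint Qm ∘ₗ Qf ∘ₗ Qm))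
    (hDQc : IsUnit (D + LinearMap.adjoint (Q ∘ₗ Qm) ∘ₗ Qfc ∘ₗ (Q ∘ₗ Qm)))
    (S : Module.End ℝ Hm)
    (hS : S = Ring.inverse (D + LinearMap.adjoint Qm ∘ₗ Qf ∘ₗ Qm))
    (Sc : Module.End ℝ Hm)
    (hSc : Sc = Ring.inverse (D + LinearMap.adjoint (Q ∘ₗ Qm) ∘ₗ Qfc ∘ₗ (Q ∘ₗ Qm)))
    (hD : IsUnit D)
    (Δ : Module.End ℝ H)
    (hΔ : Δ = Qf - Qf ∘ₗ Qm ∘ₗ S ∘ₗ LinearMap.adjoint Qm ∘ₗ Qf)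
    (hΔb : IsUnit (Δ + b • (LinearMap.adjoint Q ∘ₗ Q)))
    (C : Module.End ℝ H)
    (hC : C = Ring.inverse (Δ + b • (LinearMap.adjoint Q ∘ₗ Q))) :
    C = Ring.inverse (b • (LinearMap.adjoint Q ∘ₗ Q) + Qf)
      + Ring.inverse (b • (LinearMap.adjoint Q ∘ₗ Q) + Qf)
          ∘ₗ Qf ∘ₗ Qm ∘ₗ Sc ∘ₗ LinearMap.adjoint Qm ∘ₗ Qf
          ∘ₗ Ring.inverse (b • (LinearMap.adjoint Q ∘ₗ Q) + Qf) := by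
  have uF : IsUnit Qf := aux_unit Qf hQfpos
  have uM : IsUnit (b • (LinearMap.adjoint Q ∘ₗ Q) + Qf) := by
    apply aux_unit
    intro x hx
    have h1 := hQfpos x hx
    simp only [LinearMap.add_apply, LinearMap.smul_apply, LinearMap.comp_apply, inner_add_left,
      real_inner_smul_left, LinearMap.adjoint_inner_left]
    have h2 : 0 ≤ ⟪Q x, Q x⟫ := real_inner_self_nonneg
    positivity
  have uA : IsUnit (b⁻¹ • (1 : Module.End ℝ Hp)
        + Q ∘ₗ Ring.inverse Qf ∘ₗ LinearMap.adjoint Q) := by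
    apply aux_unit
    intro x hx
    have h1 : 0 < ⟪x, x⟫ := real_inner_self_pos.2 hx
    have h2 : 0 ≤ ⟪Q (Ring.inverse Qf (LinearMap.adjoint Q x)), x⟫ := by
      rw [← LinearMap.adjoint_inner_right]
      set z := Ring.inverse Qf (LinearMap.adjoint Q x) with hz
      have h3 : LinearMap.adjoint Q x = Qf z := by rw [hz, aux_right Qf uF]
      rw [h3, real_inner_comm]
      by_cases h0 : z = 0
      · simp [h0]
      · exact (hQfpos z h0).le
    simp only [LinearMap.add_apply, LinearMap.smul_apply, LinearMap.comp_apply, inner_add_left,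
      real_inner_smul_left, Module.End.one_apply]
    positivity
  have rM := aux_right _ uM
  have lA := aux_left _ uA
  have lF := aux_left _ uF
  have lE := aux_left _ hDQ
  have rSc := aux_right _ hDQc
  have lT := aux_left _ hΔb
  rw [← hQfc] at lA
  rw [← hS] at lE
  rw [← hSc] at rSc
  rw [← hC] at lT
  generalize Ring.inverse (b • (LinearMap.adjoint Q ∘ₗ Q) + Qf) = R at *
  generalize Ring.inverse Qf = G at *
  simp only [LinearMap.add_apply, LinearMap.smul_apply, LinearMap.comp_apply,
    Module.End.one_apply, LinearMap.adjoint_comp] at rM lA lE rSc lT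
  have key : ∀ x, LinearMap.adjoint Q (Qfc (Q x)) = Qf x - Qf (R (Qf x)) := by
    intro x
    have h1 := rM (Qf x)
    have h2 : b • LinearMap.adjoint Q (Q (R (Qf x))) = Qf x - Qf (R (Qf x)) :=
      eq_sub_of_add_eq h1
    have h3 := lA (b • Q (R (Qf x)))
    rw [map_smul (LinearMap.adjoint Q), h2, map_sub G, lF, lF, smul_smul,
      inv_mul_cancel₀ hb.ne', one_smul, map_sub, add_sub_cancel] at h3
    rw [h3, map_smul, h2]
  ext x
  simp only [LinearMap.add_apply, LinearMap.comp_apply]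
  set s := LinearMap.adjoint Qm (Qf (R x)) with hs
  set t := Sc s with ht
  have h4 := rSc s
  rw [← ht, key, map_sub] at h4
  have h5 : LinearMap.adjoint Qm (Qf (R (Qf (Qm t))))
      = D t + LinearMap.adjoint Qm (Qf (Qm t)) - s := by
    rw [← h4]; abel
  have h6 := lT (R x + R (Qf (Qm t)))
  rw [← h6]
  congr 1
  have h7 := rM (R x + R (Qf (Qm t)))
  have h8 := rM x
  have h9 := rM (Qf (Qm t))
  rw [hΔ]
  simp only [LinearMap.sub_apply, LinearMap.comp_apply, map_add, smul_add]
  rw [← hs, h5, map_sub S, lE, map_sub Qm, map_sub Qf]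
  rw [eq_comm, ← sub_eq_zero] at h8 h9
  rw [← sub_eq_zero, ← h8, ← sub_eq_zero]
  rw [← h9]
  abel
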